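/- For all real numbers r1, r2 ≥ 0 with (r1, r2) ≠ (0, 0), one has 2 · Re ∫₀^∞ (1 + 16 t²)^{−1/2} · exp(−(1/√2)·(r1·√(1 + 4it) + r2·√(1 − 4it))) · ((1/√2)·√(1 + 4it) − (1/√2)·√(1 − 4it)) dt = ((r1 − r2)/√(r1² + r2²)) · K₁(√(r1² + r2²)), where the complex square roots are principal-branch square roots. -/

import Mathlib

/-!
The substitution `4 t = sinh (2 u)` gives `√(1 ± 4it) = cosh u ± i sinh u`. With
`A = (r1 + r2)/√2`, `B = (r1 - r2)/√2`, the left side becomes `-√2 · Im J`, where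
`J = ∫₀^∞ exp (-(A cosh u + i B sinh u)) sinh u du`.

Write `A + iB = R e^{iθ}`, so that `R = √(r1² + r2²)` and `A cosh u + i B sinh u = R cosh (u + iθ)`.
Then `J` is the integral of the entire function `f z = exp (-R cosh z) sinh (z - iθ)` over the
half-line `iθ + (0, ∞)`. Cauchy's theorem on the rectangle with corners `0` and `T + iθ` moves it
to the real half-line: the side `Re z = T` contributes `0` in the limit since `R cos y ≥ A > 0` for
`|y| ≤ |θ|`, and the side on the imaginary axis contributes a real number, because `f` is purely
imaginary there. On the real half-line `Im f = -sin θ · exp (-R cosh x) cosh x`, and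
`K₁(R) = ∫₀^∞ exp (-R cosh x) cosh x dx` follows from the definition by putting `t = cosh x` and
integrating by parts.
-/

open MeasureTheory

noncomputable section

/-- The modified Bessel function of the second kind `K₁`, via its integral representation
`K₁(z) = z · ∫₁^∞ e^{−zt} (t² − 1)^{1/2} dt`. -/
def K1 (z : ℝ) : ℝ := z * ∫ t in Set.Ioi (1:ℝ), Real.exp (-z*t) * Real.sqrt (t^2 - 1)

/-- Principal-branch complex square root. -/
def csqrt (z : ℂ) : ℂ := z ^ ((1:ℂ)/2)

/-! ### The kernel and the contour shift -/

/-- The entire integrand whose values on the line `Im z = θ` give the left side, and whose values on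
the real line give `K₁`. -/
def besselKernel (R θ : ℝ) (z : ℂ) : ℂ :=
  Complex.exp (-R * Complex.cosh z) * Complex.sinh (z - θ * Complex.I)

lemma cosh_add_mul_I' (x y : ℝ) : Complex.cosh (x + y * Complex.I) =
    ((Real.cosh x * Real.cos y : ℝ) : ℂ) + ((Real.sinh x * Real.sin y : ℝ) : ℂ) * Complex.I := by
  rw [Complex.cosh_add, Complex.cosh_mul_I, Complex.sinh_mul_I]
  push_cast; ring

lemma sinh_add_mul_I' (x y : ℝ) : Complex.sinh (x + y * Complex.I) =
    ((Real.sinh x * Real.cos y : ℝ) : ℂ) + ((Real.cosh x * Real.sin y : ℝ) : ℂ) * Complex.I := by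
  rw [Complex.sinh_add, Complex.cosh_mul_I, Complex.sinh_mul_I]
  push_cast; ring

lemma besselKernel_eq (R θ x y : ℝ) : besselKernel R θ (x + y * Complex.I) =
    Complex.exp (((-(R * Real.cos y) * Real.cosh x : ℝ) : ℂ) +
      ((-(R * Real.sin y) * Real.sinh x : ℝ) : ℂ) * Complex.I) *
    (((Real.sinh x * Real.cos (y - θ) : ℝ) : ℂ) +
      ((Real.cosh x * Real.sin (y - θ) : ℝ) : ℂ) * Complex.I) := by
  have h : (x : ℂ) + y * Complex.I - θ * Complex.I = x + ((y - θ : ℝ) : ℂ) * Complex.I := by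
    push_cast; ring
  rw [besselKernel, h, sinh_add_mul_I', cosh_add_mul_I']
  congr 2
  push_cast; ring

lemma differentiable_besselKernel (R θ : ℝ) : Differentiable ℂ (besselKernel R θ) := by
  unfold besselKernel
  fun_prop

/-- `x² ≤ (2/A²) e^{Ax}` at `cosh x` makes the integrands exponentially small. -/
lemma exp_cosh_bound {A : ℝ} (hA : 0 < A) (x : ℝ) :
    Real.exp (-A * Real.cosh x) * Real.cosh x ≤ 4 / A ^ 2 * Real.exp (-x) := by
  have hc := Real.cosh_pos x
  have h1 := Real.quadratic_le_exp_of_nonneg (mul_pos hA hc).le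
  have h2 : Real.exp x ≤ 2 * Real.cosh x := by
    rw [Real.cosh_eq]; linarith [Real.exp_pos (-x)]
  have h3 : A ^ 2 * Real.cosh x ^ 2 / 2 ≤ Real.exp (A * Real.cosh x) := by
    nlinarith [mul_pos hA hc]
  rw [neg_mul, Real.exp_neg, Real.exp_neg, inv_mul_eq_div, ← div_eq_mul_inv, div_div,
    div_le_div_iff₀ (Real.exp_pos _) (by positivity)]
  calc Real.cosh x * (A ^ 2 * Real.exp x) ≤ Real.cosh x * (A ^ 2 * (2 * Real.cosh x)) := by gcongr
    _ = 4 * (A ^ 2 * Real.cosh x ^ 2 / 2) := by ring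
    _ ≤ _ := by gcongr

lemma norm_besselKernel_le {A R θ x y : ℝ} (hA : 0 < A) (h : A ≤ R * Real.cos y) :
    ‖besselKernel R θ (x + y * Complex.I)‖ ≤ 4 / A ^ 2 * Real.exp (-x) := by
  refine le_trans ?_ (exp_cosh_bound hA x)
  have hc := Real.cosh_pos x
  rw [besselKernel_eq, norm_mul, Complex.norm_exp]
  gcongr
  · rw [Complex.add_re, Complex.ofReal_re, Complex.re_ofReal_mul, Complex.I_re, mul_zero, add_zero]
    gcongr
  · rw [Complex.norm_add_mul_I]
    apply Real.sqrt_le_iff.2 ⟨hc.le, ?_⟩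
    nlinarith [Real.cosh_sq x, Real.sin_sq_add_cos_sq (y - θ), sq_nonneg (Real.cos (y - θ))]

lemma integrableOn_besselKernel {A R θ y : ℝ} (hA : 0 < A) (h : A ≤ R * Real.cos y) :
    IntegrableOn (fun x : ℝ => besselKernel R θ (x + y * Complex.I)) (Set.Ioi 0) := by
  refine Integrable.mono' ((integrableOn_exp_neg_Ioi 0).const_mul (4 / A ^ 2)) ?_
    (Filter.Eventually.of_forall fun x => norm_besselKernel_le hA h)
  exact ((differentiable_besselKernel R θ).continuous.comp (by fun_prop)).aestronglyMeasurable

lemma integrableOn_exp_cosh {R : ℝ} (hR : 0 < R) :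
    IntegrableOn (fun x : ℝ => Real.exp (-R * Real.cosh x) * Real.cosh x) (Set.Ioi 0) := by
  refine Integrable.mono' ((integrableOn_exp_neg_Ioi 0).const_mul (4 / R ^ 2)) ?_
    (Filter.Eventually.of_forall fun x => ?_)
  · exact Continuous.aestronglyMeasurable (by fun_prop)
  · have hc := Real.cosh_pos x
    rw [Real.norm_of_nonneg (by positivity)]
    exact exp_cosh_bound hR x

/-- The contour shift: the imaginary part of the integral over `iθ + (0, ∞)` equals that over
`(0, ∞)`, as the kernel is imaginary on the segment from `0` to `iθ`. -/
lemma im_integral_besselKernel {R θ : ℝ} (hR : 0 < R) (hθ : |θ| ≤ Real.pi)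
    (hA : 0 < R * Real.cos θ) :
    (∫ x in Set.Ioi (0:ℝ), besselKernel R θ (x + θ * Complex.I)).im =
      -(Real.sin θ * ∫ x in Set.Ioi (0:ℝ), Real.exp (-R * Real.cosh x) * Real.cosh x) := by
  have hy : ∀ y : ℝ, |y| ≤ |θ| → R * Real.cos θ ≤ R * Real.cos y := fun y h => by
    gcongr
    rw [← Real.cos_abs y, ← Real.cos_abs θ]
    exact Real.cos_le_cos_of_nonneg_of_le_pi (abs_nonneg _) hθ h
  have hi0 := integrableOn_besselKernel (θ := θ) hA (hy 0 (by simp))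
  have hi1 := integrableOn_besselKernel (θ := θ) hA (hy θ le_rfl)
  have hreal : (∫ x in Set.Ioi (0:ℝ), besselKernel R θ (x + (0:ℝ) * Complex.I)).im =
      -(Real.sin θ * ∫ x in Set.Ioi (0:ℝ), Real.exp (-R * Real.cosh x) * Real.cosh x) := by
    have := integral_im hi0
    simp only [RCLike.im_to_complex] at this
    rw [← this, ← integral_const_mul, ← integral_neg]
    congr 1
    ext x
    rw [besselKernel_eq]
    simp only [Real.sin_zero, Real.cos_zero, mul_zero, neg_zero, zero_mul, Complex.ofReal_zero,
      add_zero, mul_one, ← Complex.ofReal_exp, Complex.im_ofReal_mul]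
    simp [-Complex.ofReal_sin, -Complex.ofReal_cos]
    ring
  have hleft : (Complex.I • ∫ y in (0:ℝ)..θ, besselKernel R θ ((0:ℝ) + y * Complex.I)).im = 0 := by
    have : ∀ y : ℝ, besselKernel R θ ((0:ℝ) + y * Complex.I) =
        ((Real.exp (-(R * Real.cos y)) * Real.sin (y - θ) : ℝ) : ℂ) * Complex.I := fun y => by
      rw [besselKernel_eq]
      simp
      ring
    simp only [this]
    rw [intervalIntegral.integral_mul_const, intervalIntegral.integral_ofReal]
    simp
  have hright : Filter.Tendsto (fun T : ℝ => (Complex.I •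
      ∫ y in (0:ℝ)..θ, besselKernel R θ (T + y * Complex.I)).im) Filter.atTop (nhds 0) := by
    have hb : ∀ T : ℝ, ‖(Complex.I •
        ∫ y in (0:ℝ)..θ, besselKernel R θ (T + y * Complex.I)).im‖ ≤
        4 / (R * Real.cos θ) ^ 2 * Real.exp (-T) * |θ - 0| := fun T => by
      refine (Complex.abs_im_le_norm _).trans ?_
      rw [norm_smul, Complex.norm_I, one_mul]
      refine intervalIntegral.norm_integral_le_of_norm_le_const fun y h => ?_
      refine norm_besselKernel_le hA (hy y ?_)
      have := Set.abs_sub_left_of_mem_uIcc (Set.uIoc_subset_uIcc h)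
      simpa using this
    refine squeeze_zero_norm hb ?_
    have := (Real.tendsto_exp_neg_atTop_nhds_zero.const_mul
      (4 / (R * Real.cos θ) ^ 2)).mul_const |θ - 0|
    simpa using this
  have hrect : ∀ T : ℝ,
      (∫ x in (0:ℝ)..T, besselKernel R θ (x + (0:ℝ) * Complex.I)).im -
      (∫ x in (0:ℝ)..T, besselKernel R θ (x + θ * Complex.I)).im +
      (Complex.I • ∫ y in (0:ℝ)..θ, besselKernel R θ (T + y * Complex.I)).im = 0 := fun T => by
    have := congrArg Complex.im (Complex.integral_boundary_rect_eq_zero_of_differentiableOn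
      (besselKernel R θ) 0 ⟨T, θ⟩ (differentiable_besselKernel R θ).differentiableOn)
    simp only [Complex.sub_im, Complex.add_im, Complex.zero_re, Complex.zero_im, hleft] at this
    simpa using this
  have l0 := (Complex.continuous_im.tendsto _).comp
    (intervalIntegral_tendsto_integral_Ioi 0 hi0 Filter.tendsto_id)
  have l1 := (Complex.continuous_im.tendsto _).comp
    (intervalIntegral_tendsto_integral_Ioi 0 hi1 Filter.tendsto_id)
  have hlim := tendsto_nhds_unique ((l0.sub l1).add hright)
    (tendsto_const_nhds.congr fun T => (hrect T).symm)
  rw [hreal] at hlim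
  linarith

/-! ### The function `K₁` -/

lemma image_cosh_Ioi : Real.cosh '' Set.Ioi 0 = Set.Ioi 1 := by
  ext t
  constructor
  · rintro ⟨x, hx, rfl⟩
    exact Real.one_lt_cosh.2 (ne_of_gt hx)
  · intro ht
    exact ⟨Real.arcosh t, Real.arcosh_pos ht, Real.cosh_arcosh (le_of_lt ht)⟩

lemma K1_eq {R : ℝ} (hR : 0 < R) :
    K1 R = ∫ x in Set.Ioi (0:ℝ), Real.exp (-R * Real.cosh x) * Real.cosh x := by
  have hsub : ∫ t in Set.Ioi (1:ℝ), Real.exp (-R*t) * Real.sqrt (t^2 - 1) =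
      ∫ x in Set.Ioi (0:ℝ), Real.exp (-R * Real.cosh x) * Real.sinh x ^ 2 := by
    rw [← image_cosh_Ioi, integral_image_eq_integral_abs_deriv_smul measurableSet_Ioi
      (fun x _ => (Real.hasDerivAt_cosh x).hasDerivWithinAt)
      (Real.cosh_strictMonoOn.injOn.mono Set.Ioi_subset_Ici_self)]
    refine setIntegral_congr_fun measurableSet_Ioi fun x hx => ?_
    have hs : 0 < Real.sinh x := Real.sinh_pos_iff.2 hx
    have : Real.cosh x ^ 2 - 1 = Real.sinh x ^ 2 := by rw [Real.cosh_sq]; ring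
    simp only [this, Real.sqrt_sq hs.le, abs_of_pos hs, smul_eq_mul]
    ring
  have hi := integrableOn_exp_cosh hR
  have hbound : ∀ x : ℝ, |Real.sinh x| ≤ Real.cosh x := fun x =>
    abs_le_of_sq_le_sq (by rw [Real.cosh_sq]; linarith) (Real.cosh_pos x).le
  have hi2 : IntegrableOn (fun x : ℝ => Real.exp (-R * Real.cosh x) * Real.sinh x ^ 2)
      (Set.Ioi 0) := by
    -- `sinh² ≤ cosh²`, and half of the exponent absorbs one factor `cosh`.
    refine Integrable.mono' ((integrableOn_exp_cosh (half_pos hR)).const_mul (2 / R)) ?_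
      (Filter.Eventually.of_forall fun x => ?_)
    · exact Continuous.aestronglyMeasurable (by fun_prop)
    · have hc := Real.cosh_pos x
      rw [Real.norm_of_nonneg (by positivity)]
      have h1 : R / 2 * Real.cosh x ≤ Real.exp (R / 2 * Real.cosh x) := by
        linarith [Real.add_one_le_exp (R / 2 * Real.cosh x)]
      have h2 : Real.exp (-R * Real.cosh x) * Real.exp (R / 2 * Real.cosh x) =
          Real.exp (-(R / 2) * Real.cosh x) := by rw [← Real.exp_add]; ring_nf
      calc Real.exp (-R * Real.cosh x) * Real.sinh x ^ 2
          ≤ Real.exp (-R * Real.cosh x) * Real.cosh x ^ 2 := by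
            gcongr 1
            rw [Real.cosh_sq]; linarith
        _ = 2 / R * (Real.exp (-R * Real.cosh x) * (R / 2 * Real.cosh x) * Real.cosh x) := by
            field_simp
        _ ≤ 2 / R * (Real.exp (-R * Real.cosh x) * Real.exp (R / 2 * Real.cosh x)
              * Real.cosh x) := by gcongr
        _ = _ := by rw [h2]
  have hparts := integral_Ioi_of_hasDerivAt_of_tendsto (a := 0) (m := 0)
    (f := fun x => Real.exp (-R * Real.cosh x) * Real.sinh x)
    (f' := fun x => Real.exp (-R * Real.cosh x) * Real.cosh x -
      R * (Real.exp (-R * Real.cosh x) * Real.sinh x ^ 2))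
    (Continuous.continuousWithinAt (by fun_prop))
    (fun x _ => by
      refine ((((Real.hasDerivAt_cosh x).const_mul (-R)).exp).mul
        (Real.hasDerivAt_sinh x)).congr_deriv ?_
      ring)
    (hi.sub (hi2.const_mul R))
    (by
      refine squeeze_zero_norm (a := fun x => 4 / R ^ 2 * Real.exp (-x)) (fun x => ?_) ?_
      · refine le_trans ?_ (exp_cosh_bound hR x)
        rw [norm_mul, Real.norm_eq_abs, Real.norm_eq_abs, Real.abs_exp]
        gcongr
        exact hbound x
      · simpa using Real.tendsto_exp_neg_atTop_nhds_zero.const_mul (4 / R ^ 2))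
  rw [integral_sub hi (hi2.const_mul R), integral_const_mul] at hparts
  simp only [Real.sinh_zero, mul_zero, sub_zero] at hparts
  rw [K1, hsub]
  linarith

/-! ### The substitution `4 t = sinh (2 u)` -/

lemma image_sinh_Ioi : (fun u : ℝ => Real.sinh (2 * u) / 4) '' Set.Ioi 0 = Set.Ioi 0 := by
  ext t
  constructor
  · rintro ⟨x, hx, rfl⟩
    have : 0 < Real.sinh (2 * x) := Real.sinh_pos_iff.2 (by simpa using hx)
    simpa using this
  · intro ht
    refine ⟨Real.arsinh (4 * t) / 2, ?_, ?_⟩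
    · have : 0 < Real.arsinh (4 * t) := Real.arsinh_pos_iff.2 (by simpa using ht)
      simpa using this
    · simp only [mul_div_cancel₀ (Real.arsinh (4 * t)) (two_ne_zero (α := ℝ)), Real.sinh_arsinh]
      ring

/-- Both square roots at once, with `s = u` and `s = -u`. -/
lemma csqrt_sinh (s : ℝ) : csqrt (1 + Real.sinh (2 * s) * Complex.I) =
    Real.cosh s + Real.sinh s * Complex.I := by
  have h : (1 + Real.sinh (2 * s) * Complex.I : ℂ) =
      (Real.cosh s + Real.sinh s * Complex.I : ℂ) ^ 2 := by
    have h1 : (Real.cosh s : ℂ) ^ 2 = (Real.sinh s : ℂ) ^ 2 + 1 := by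
      exact_mod_cast Real.cosh_sq s
    rw [Real.sinh_two_mul]
    push_cast at h1 ⊢
    linear_combination -h1 - Complex.sinh s ^ 2 * Complex.I_sq
  rw [csqrt, h, one_div]
  exact Complex.sq_cpow_two_inv (by simpa using Real.cosh_pos s)

theorem stmt5 (r1 r2 : ℝ) (hr1 : 0 ≤ r1) (hr2 : 0 ≤ r2) (hne : (r1, r2) ≠ (0, 0)) :
    2 * (∫ t in Set.Ioi (0:ℝ),
        (1/(Real.sqrt (1 + 16*t^2) : ℂ)) *
          Complex.exp (-(1/(Real.sqrt 2 : ℂ)) *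
            (r1 * csqrt (1 + 4*Complex.I*t) + r2 * csqrt (1 - 4*Complex.I*t))) *
          ((1/(Real.sqrt 2 : ℂ)) * csqrt (1 + 4*Complex.I*t) -
            (1/(Real.sqrt 2 : ℂ)) * csqrt (1 - 4*Complex.I*t))).re
      = (r1 - r2)/Real.sqrt (r1^2 + r2^2) * K1 (Real.sqrt (r1^2 + r2^2)) := by
  have hsum : 0 < r1 + r2 := by
    rcases hr1.lt_or_eq with h | h
    · linarith
    · rcases hr2.lt_or_eq with h' | h'
      · linarith
      · exact absurd (by rw [← h, ← h']) hne
  have h2 : 0 < Real.sqrt 2 := by positivity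
  have h22 : Real.sqrt 2 ^ 2 = 2 := Real.sq_sqrt (by norm_num)
  set R := Real.sqrt (r1^2 + r2^2) with hRdef
  have hR : 0 < R := Real.sqrt_pos.2 (by nlinarith [sq_nonneg (r1 - r2)])
  -- Polar form `A + iB = R e^{iθ}`.
  obtain ⟨θ, hθ, hcos, hsin⟩ : ∃ θ : ℝ, |θ| ≤ Real.pi ∧
      R * Real.cos θ = (r1 + r2) / Real.sqrt 2 ∧ R * Real.sin θ = (r1 - r2) / Real.sqrt 2 := by
    have hn : ‖(⟨(r1 + r2) / Real.sqrt 2, (r1 - r2) / Real.sqrt 2⟩ : ℂ)‖ = R := by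
      rw [Complex.norm_eq_sqrt_sq_add_sq, hRdef]
      congr 1
      simp only [div_pow, h22]
      ring
    refine ⟨_, Complex.abs_arg_le_pi
      ⟨(r1 + r2) / Real.sqrt 2, (r1 - r2) / Real.sqrt 2⟩, ?_, ?_⟩
    · rw [← hn, Complex.norm_mul_cos_arg]
    · rw [← hn, Complex.norm_mul_sin_arg]
  have hshift := im_integral_besselKernel hR hθ (by rw [hcos]; positivity)
  rw [← K1_eq hR] at hshift
  have hderiv : ∀ u ∈ Set.Ioi (0:ℝ), HasDerivWithinAt (fun u : ℝ => Real.sinh (2 * u) / 4)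
      (Real.cosh (2 * u) / 2) (Set.Ioi 0) u := fun u _ => by
    have := ((((hasDerivAt_id u).const_mul 2).sinh).div_const 4).hasDerivWithinAt
      (s := Set.Ioi (0:ℝ))
    refine this.congr_deriv ?_
    simp only [id]
    ring
  have hinj : Set.InjOn (fun u : ℝ => Real.sinh (2 * u) / 4) (Set.Ioi 0) := fun a _ b _ h => by
    have h' : Real.sinh (2 * a) = Real.sinh (2 * b) := by
      have h : Real.sinh (2 * a) / 4 = Real.sinh (2 * b) / 4 := h
      linarith
    linarith [Real.sinh_injective h']
  rw [← image_sinh_Ioi, integral_image_eq_integral_abs_deriv_smul measurableSet_Ioi hderiv hinj]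
  have hint : ∀ u : ℝ, |Real.cosh (2 * u) / 2| •
      ((1/(Real.sqrt (1 + 16*(Real.sinh (2 * u) / 4)^2) : ℂ)) *
          Complex.exp (-(1/(Real.sqrt 2 : ℂ)) *
            (r1 * csqrt (1 + 4*Complex.I*((Real.sinh (2 * u) / 4 : ℝ) : ℂ)) +
              r2 * csqrt (1 - 4*Complex.I*((Real.sinh (2 * u) / 4 : ℝ) : ℂ)))) *
          ((1/(Real.sqrt 2 : ℂ)) * csqrt (1 + 4*Complex.I*((Real.sinh (2 * u) / 4 : ℝ) : ℂ)) -
            (1/(Real.sqrt 2 : ℂ)) * csqrt (1 - 4*Complex.I*((Real.sinh (2 * u) / 4 : ℝ) : ℂ))))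
      = ((1 / Real.sqrt 2 : ℝ) : ℂ) * Complex.I *
          besselKernel R θ (u + θ * Complex.I) := fun u => by
    have hc := Real.cosh_pos (2 * u)
    have hs : Real.sqrt (1 + 16*(Real.sinh (2 * u) / 4)^2) = Real.cosh (2 * u) := by
      rw [show 1 + 16*(Real.sinh (2 * u) / 4)^2 = Real.cosh (2 * u) ^ 2 by
        rw [Real.cosh_sq]; ring]
      exact Real.sqrt_sq hc.le
    have e1 : csqrt (1 + 4*Complex.I*((Real.sinh (2 * u) / 4 : ℝ) : ℂ)) =
        Real.cosh u + Real.sinh u * Complex.I := by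
      rw [← csqrt_sinh]; congr 1; push_cast; ring
    have e2 : csqrt (1 - 4*Complex.I*((Real.sinh (2 * u) / 4 : ℝ) : ℂ)) =
        Real.cosh u - Real.sinh u * Complex.I := by
      have := csqrt_sinh (-u)
      rw [mul_neg, Real.sinh_neg, Real.sinh_neg, Real.cosh_neg] at this
      push_cast at this ⊢
      convert this using 1 <;> [(congr 1; ring); ring]
    have hcC : (Real.cosh (2 * u) : ℂ) ≠ 0 := by exact_mod_cast hc.ne'
    have h2C : (Real.sqrt 2 : ℂ) ≠ 0 := by exact_mod_cast h2.ne'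
    rw [e1, e2, hs, besselKernel_eq, hcos, hsin, abs_of_pos (by positivity), Complex.real_smul]
    have he : -(1/(Real.sqrt 2 : ℂ)) * (r1 * (Real.cosh u + Real.sinh u * Complex.I) +
          r2 * (Real.cosh u - Real.sinh u * Complex.I)) =
        ((-((r1 + r2) / Real.sqrt 2) * Real.cosh u : ℝ) : ℂ) +
        ((-((r1 - r2) / Real.sqrt 2) * Real.sinh u : ℝ) : ℂ) * Complex.I := by
      push_cast; ring
    rw [he]
    generalize Complex.exp _ = E
    simp only [sub_self, Real.cos_zero, Real.sin_zero, mul_one, mul_zero, Complex.ofReal_zero,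
      zero_mul, add_zero]
    rw [Complex.ofReal_div, Complex.ofReal_div]
    generalize (Real.cosh (2 * u) : ℂ) = c at *
    simp only [Complex.ofReal_ofNat, Complex.ofReal_one]
    field_simp
    ring
  simp only [hint]
  rw [integral_const_mul, mul_assoc, Complex.re_ofReal_mul, Complex.I_mul_re, hshift]
  have : Real.sin θ = (r1 - r2) / Real.sqrt 2 / R := by rw [← hsin]; field_simp
  rw [this]
  field_simp
  rw [h22]

end
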